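/- There exist fixed natural numbers m and s such that there is no algorithm (no computable function) which, given arrays of integers a = (a^{i,j}_q) indexed by 1 ≤ i < j ≤ s and 1 ≤ q ≤ m, and b = (b_1,…,b_m), decides whether there exist integers x_1,…,x_s, y_1,…,y_s satisfying ∑_{1 ≤ i < j ≤ s} a^{i,j}_q · (x_i y_j − x_j y_i) = b_q for every 1 ≤ q ≤ m. Formally: there exist m, s such that the predicate (SKEW) on pairs (a,b) is not a computable predicate with respect to the standard encoding of finite integer arrays. -/

import Mathlib

/-- The property (SKEW): there are integers `x 1, …, x s, y 1, …, y s` such that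
`∑_{1 ≤ i < j ≤ s} a q i j * (x i * y j - x j * y i) = b q` for every `q`. -/
def SKEW (m s : ℕ) (a : Fin m → Fin s → Fin s → ℤ) (b : Fin m → ℤ) : Prop :=
  ∃ x y : Fin s → ℤ, ∀ q : Fin m,
    (∑ i : Fin s, ∑ j : Fin s, if i < j then a q i j * (x i * y j - x j * y i) else 0) = b q

/-!
Every recursively enumerable `p : ℕ → Prop` is Diophantine: Gödel's β function reduces primitive
recursion to the bounded quantifier `∀ k < y`, the one difficult closure property. If `Q` is large,
`(Q! ^ 2 - 1).choose y` is the product over `k < y` of the pairwise coprime numbers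
`Q! ^ 2 / (k + 1) - 1`, modulo which `Q! ^ 2 - 1` is `k`, so the Chinese remainder theorem merges
the `y` equations into one divisibility. By Putnam's trick and the four-square theorem, `p n` then
says that `n` is a value of one fixed integer polynomial.

For (SKEW), attach to every monomial value `w` the two columns `(w, 0)` and `(0, w)` of a two-row
matrix; the minor of `(w, 0)` and `(0, u)` is `w * u`. Conversely, normalising one minor to `1`,
the Plücker relation makes suitable minors multiplicative, so finitely many prescribed linear
combinations of minors force the matrix to encode the monomial values at an integer point. A
further linear combination is then an arbitrary integer polynomial.
-/

open Finset
open scoped Function Nat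

theorem ofDigits_map_range (b : ℕ) (d : ℕ → ℕ) (n : ℕ) :
    Nat.ofDigits b ((List.range n).map d) = ∑ i ∈ range n, b ^ i * d i := by
  induction n with
  | zero => rfl
  | succ n ih => simp [List.range_succ, Nat.ofDigits_append, ih, sum_range_succ]

-- The base-`b` digits of `(b + 1) ^ n` are the binomial coefficients.
theorem choose_eq_pow_div_pow_mod {n b : ℕ} (hb : ∀ i, n.choose i < b) (k : ℕ) :
    n.choose k = (b + 1) ^ n / b ^ k % b := by
  have hb1 : 1 < b := by simpa using hb 0
  have expansion : (b + 1) ^ n = Nat.ofDigits b ((List.range (n + 1)).map n.choose) := by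
    simp [ofDigits_map_range, add_pow]
  have digits : Nat.digits b ((b + 1) ^ n) = (List.range (n + 1)).map n.choose := by
    rw [expansion, Nat.digits_ofDigits b hb1 _ (by simp [hb]) (by simp [List.getLast_map])]
  rw [← Nat.getD_digits _ _ hb1, digits]
  rcases lt_or_ge k (n + 1) with hk | hk
  · simp [hk]
  · rw [Nat.choose_eq_zero_of_lt hk, List.getD_eq_default _ _ (by simpa using hk)]

theorem pow_mul_one_sub_le_descFactorial {n r : ℕ} (hnr : n ≤ r) (hr : 0 < r) :
    (r : ℚ) ^ n * (1 - n ^ 2 / r) ≤ r.descFactorial n := by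
  have hr' : (0 : ℚ) < r := mod_cast hr
  have hnr' : (n : ℚ) / r ≤ 1 := (div_le_one hr').2 (mod_cast hnr)
  calc (r : ℚ) ^ n * (1 - n ^ 2 / r)
      = r ^ n * (1 + n * -(n / r)) := by ring
    _ ≤ r ^ n * (1 + -(n / r)) ^ n := by gcongr; exact one_add_mul_le_pow (by linarith) n
    _ = ((r - n : ℕ) : ℚ) ^ n := by
        rw [← mul_pow, Nat.cast_sub hnr]
        congr 1
        field_simp
        ring
    _ ≤ ((r + 1 - n : ℕ) : ℚ) ^ n := by gcongr; omega
    _ ≤ r.descFactorial n := mod_cast Nat.pow_sub_le_descFactorial r n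

theorem pow_div_choose_eq_factorial {n r : ℕ} (hr : n ^ 2 * (n ! + 1) < r) :
    r ^ n / r.choose n = n ! := by
  have hnr : n ≤ r := by nlinarith [Nat.factorial_pos n]
  have hdesc : r.descFactorial n = n ! * r.choose n := Nat.descFactorial_eq_factorial_mul_choose r n
  have lower : n ! * r.choose n ≤ r ^ n := hdesc ▸ Nat.descFactorial_le_pow r n
  have upper : r ^ n < (n ! + 1) * r.choose n := by
    have hr0 : (0 : ℚ) < r := mod_cast (Nat.zero_le _).trans_lt hr
    have small : (n ! + 1 : ℚ) * (n ^ 2 / r) < 1 := by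
      rw [mul_div, div_lt_one hr0, mul_comm]
      exact mod_cast hr
    have : (n ! : ℚ) * r ^ n < n ! * ((n ! + 1) * r.choose n) := by
      calc (n ! : ℚ) * r ^ n < (n ! + 1 - (n ! + 1) * (n ^ 2 / r)) * r ^ n := by
            gcongr
            linarith
        _ = (n ! + 1) * (r ^ n * (1 - n ^ 2 / r)) := by ring
        _ ≤ (n ! + 1) * r.descFactorial n := by
            gcongr
            exact pow_mul_one_sub_le_descFactorial hnr (mod_cast hr0)
        _ = n ! * ((n ! + 1) * r.choose n) := by rw [hdesc]; push_cast; ring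
    have := lt_of_mul_lt_mul_left this (Nat.cast_nonneg _)
    exact_mod_cast this
  exact Nat.div_eq_of_lt_le lower upper

/-- The modulus `Q! ^ 2 / (k + 1) - 1`. For `k < y ≤ Q` these are pairwise coprime, have only prime
factors above `Q` and multiply to `(Q! ^ 2 - 1).choose y`, while `Q! ^ 2 - 1` is congruent to `k`
modulo the `k`-th one. The quotient is written so that the divisibility of the modulus plus one by
`Q!` is visible. -/
def chooseFactor (Q k : ℕ) : ℕ := Q ! * (Q ! / (k + 1)) - 1

section chooseFactor
variable {Q k l p y : ℕ}

theorem chooseFactor_add_one (hk : k < Q) : chooseFactor Q k + 1 = Q ! * (Q ! / (k + 1)) := by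
  have hdvd : k + 1 ∣ Q ! := Nat.dvd_factorial k.succ_pos hk
  have hdiv : 0 < Q ! / (k + 1) := Nat.div_pos (Nat.le_of_dvd Q.factorial_pos hdvd) k.succ_pos
  exact Nat.sub_add_cancel (Nat.mul_pos Q.factorial_pos hdiv)

theorem chooseFactor_mul_succ (hk : k < Q) : chooseFactor Q k * (k + 1) = Q ! ^ 2 - 1 - k := by
  have hdvd : k + 1 ∣ Q ! := Nat.dvd_factorial k.succ_pos hk
  have : (chooseFactor Q k + 1) * (k + 1) = Q ! ^ 2 := by
    rw [chooseFactor_add_one hk, mul_assoc, Nat.div_mul_cancel hdvd, sq]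
  rw [← this, add_one_mul, Nat.sub_sub, add_comm 1 k, Nat.add_sub_cancel]

theorem lt_factorial_sq (hk : k < Q) : k < Q ! ^ 2 :=
  hk.trans_le (Q.self_le_factorial.trans (Nat.le_self_pow two_ne_zero _))

theorem factorial_sq_sub_one_modEq (hk : k < Q) : Q ! ^ 2 - 1 ≡ k [MOD chooseFactor Q k] := by
  refine ((Nat.modEq_iff_dvd' (Nat.le_sub_one_of_lt (lt_factorial_sq hk))).2 ?_).symm
  exact ⟨k + 1, (chooseFactor_mul_succ hk).symm⟩

theorem one_lt_chooseFactor (hQ : 3 ≤ Q) (hk : k < Q) : 1 < chooseFactor Q k := by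
  have hfact : 3 ≤ Q ! := hQ.trans Q.self_le_factorial
  have hdvd : Q ! ∣ chooseFactor Q k + 1 := ⟨_, chooseFactor_add_one hk⟩
  have := Nat.le_of_dvd (Nat.succ_pos _) hdvd
  omega

theorem lt_of_prime_dvd_chooseFactor (hk : k < Q) (hp : p.Prime) (h : p ∣ chooseFactor Q k) :
    Q < p := by
  by_contra! hpQ
  have : p ∣ chooseFactor Q k + 1 := by
    rw [chooseFactor_add_one hk]
    exact (Nat.dvd_factorial hp.pos hpQ).mul_right _
  exact hp.not_dvd_one ((Nat.dvd_add_right h).1 this)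

theorem coprime_chooseFactor (hk : k < Q) (hl : l < Q) (hkl : k ≠ l) :
    (chooseFactor Q k).Coprime (chooseFactor Q l) := by
  refine Nat.coprime_of_dvd fun p hp hpk hpl => hkl ?_
  have hQp : Q < p := lt_of_prime_dvd_chooseFactor hk hp hpk
  have : k ≡ l [MOD p] := ((factorial_sq_sub_one_modEq hk).of_dvd hpk).symm.trans
    ((factorial_sq_sub_one_modEq hl).of_dvd hpl)
  exact this.eq_of_lt_of_lt (hk.trans hQp) (hl.trans hQp)

theorem choose_eq_prod_chooseFactor (hy : y ≤ Q) :
    (Q ! ^ 2 - 1).choose y = ∏ k ∈ range y, chooseFactor Q k := by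
  induction y with
  | zero => simp
  | succ y ih =>
    apply Nat.eq_of_mul_eq_mul_right y.succ_pos
    rw [Nat.succ_eq_add_one, Nat.choose_succ_right_eq, ih (Nat.le_of_succ_le hy),
      prod_range_succ, mul_assoc, chooseFactor_mul_succ hy]

theorem choose_dvd_iff_forall_chooseFactor_dvd (hy : y ≤ Q) {x : ℕ} :
    (Q ! ^ 2 - 1).choose y ∣ x ↔ ∀ k < y, chooseFactor Q k ∣ x := by
  rw [choose_eq_prod_chooseFactor hy]
  refine ⟨fun h k hk => (dvd_prod_of_mem _ (mem_range.2 hk)).trans h, fun h => ?_⟩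
  refine prod_dvd_of_isRelPrime (fun k hk l hl hkl => ?_) fun k hk => h k (mem_range.1 hk)
  rw [coe_range, Set.mem_Iio] at hk hl
  exact Nat.coprime_iff_isRelPrime.1
    (coprime_chooseFactor (hk.trans_le hy) (hl.trans_le hy) hkl)

theorem exists_forall_modEq_chooseFactor (hQ : 3 ≤ Q) (hy : y ≤ Q) (t : ℕ → ℕ) :
    ∃ a, ∀ k < y, a ≡ t k [MOD chooseFactor Q k] := by
  have nonzero : ∀ k ∈ range y, chooseFactor Q k ≠ 0 := fun k hk =>
    (zero_lt_one.trans (one_lt_chooseFactor hQ ((mem_range.1 hk).trans_le hy))).ne'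
  have coprime : Set.Pairwise (range y) (Nat.Coprime on chooseFactor Q) := fun k hk l hl =>
    coprime_chooseFactor ((mem_range.1 hk).trans_le hy) ((mem_range.1 hl).trans_le hy)
  obtain ⟨a, ha⟩ := Nat.chineseRemainderOfFinset t (chooseFactor Q) (range y) nonzero coprime
  exact ⟨a, fun k hk => ha k (mem_range.2 hk)⟩

end chooseFactor

theorem exists_lt_modEq_of_prime_dvd_descFactorial {p a u : ℕ} (hp : p.Prime)
    (h : p ∣ a.descFactorial u) : ∃ j < u, a ≡ j [MOD p] := by
  rw [Nat.descFactorial_eq_prod_range, hp.prime.dvd_finsetProd_iff] at h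
  obtain ⟨j, hj, hdvd⟩ := h
  rw [mem_range] at hj
  rcases le_total j a with hja | haj
  · exact ⟨j, hj, ((Nat.modEq_iff_dvd' hja).2 hdvd).symm⟩
  · exact ⟨a, haj.trans_lt hj, Nat.ModEq.refl a⟩

theorem dvd_descFactorial_of_modEq {d a u j : ℕ} (hj : j < u) (h : a ≡ j [MOD d]) :
    d ∣ a.descFactorial u := by
  rcases lt_or_ge a u with hau | hua
  · simp [Nat.descFactorial_of_lt hau]
  · rw [Nat.descFactorial_eq_prod_range]
    exact ((Nat.modEq_iff_dvd' (hj.le.trans hua)).1 h.symm).trans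
      (dvd_prod_of_mem (fun i => a - i) (mem_range.2 hj))

/-- `P k t` is a function of a counter `k` and a tuple `t` which respects congruences to every
modulus, as integer polynomials do. This is all that coding a bounded universal quantifier uses. -/
def PreservesModEq {ι : Type*} (P : ℕ → (ι → ℕ) → ℤ) : Prop :=
  ∀ ⦃d k k' : ℕ⦄ ⦃t t' : ι → ℕ⦄, k ≡ k' [MOD d] → (∀ i, t i ≡ t' i [MOD d]) →
    P k t ≡ P k' t' [ZMOD d]

section PreservesModEq
variable {ι : Type*} {P : ℕ → (ι → ℕ) → ℤ} {Q u y : ℕ}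

theorem PreservesModEq.exists_code (hP : PreservesModEq P) (hQ : 3 ≤ Q) (hy : y ≤ Q)
    (h : ∀ k < y, ∃ t : ι → ℕ, (∀ i, t i < u) ∧ P k t = 0) :
    ∃ a : ι → ℕ, (Q ! ^ 2 - 1).choose y ∣ (P (Q ! ^ 2 - 1) a).natAbs ∧
      ∀ i, (Q ! ^ 2 - 1).choose y ∣ (a i).descFactorial u := by
  choose! t htu ht using h
  choose a ha using fun i => exists_forall_modEq_chooseFactor hQ hy (t · i)
  simp only [choose_dvd_iff_forall_chooseFactor_dvd hy]
  refine ⟨a, fun k hk => ?_, fun i k hk => dvd_descFactorial_of_modEq (htu k hk i) (ha i k hk)⟩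
  have : P (Q ! ^ 2 - 1) a ≡ P k (t k) [ZMOD chooseFactor Q k] :=
    hP (factorial_sq_sub_one_modEq (hk.trans_le hy)) fun i => ha i k hk
  rw [ht k hk] at this
  exact Int.natCast_dvd.1 (Int.modEq_zero_iff_dvd.1 this)

theorem PreservesModEq.exists_zero_of_code (hP : PreservesModEq P) (hQ : 3 ≤ Q) (hy : y ≤ Q)
    {k : ℕ} (hk : k < y) (bound : ∀ t : ι → ℕ, (∀ i, t i < u) → (P k t).natAbs ≤ Q)
    {a : ι → ℕ} (hPa : (Q ! ^ 2 - 1).choose y ∣ (P (Q ! ^ 2 - 1) a).natAbs)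
    (ha : ∀ i, (Q ! ^ 2 - 1).choose y ∣ (a i).descFactorial u) :
    ∃ t : ι → ℕ, (∀ i, t i < u) ∧ P k t = 0 := by
  simp only [choose_dvd_iff_forall_chooseFactor_dvd hy] at hPa ha
  have hkQ : k < Q := hk.trans_le hy
  obtain ⟨p, hp, hpk⟩ := Nat.exists_prime_and_dvd (one_lt_chooseFactor hQ hkQ).ne'
  choose t htu hat using fun i =>
    exists_lt_modEq_of_prime_dvd_descFactorial hp (hpk.trans (ha i k hk))
  have hPt : P (Q ! ^ 2 - 1) a ≡ P k t [ZMOD p] :=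
    hP ((factorial_sq_sub_one_modEq hkQ).of_dvd hpk) hat
  have hdvd : (p : ℤ) ∣ P k t :=
    (Int.ModEq.dvd_iff hPt).1 (Int.natCast_dvd.2 (hpk.trans (hPa k hk)))
  have hlt : (P k t).natAbs < p := (bound t htu).trans_lt (lt_of_prime_dvd_chooseFactor hkQ hp hpk)
  exact ⟨t, htu, Int.eq_zero_of_dvd_of_natAbs_lt_natAbs hdvd hlt⟩

end PreservesModEq

section Diophantine
open Dioph
variable {α : Type}

section Closure
variable {γ : Type} {f g : (α → ℕ) → ℕ}

theorem exists_dioph_poly_eq_sub {δ : Type*} (p : Poly δ) {F : δ → (α → ℕ) → ℕ}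
    (hF : ∀ i, DiophFn (F i)) :
    ∃ f g : (α → ℕ) → ℕ, DiophFn f ∧ DiophFn g ∧ ∀ v, p (fun i => F i v) = f v - g v := by
  induction p using Poly.induction with
  | H1 i => exact ⟨F i, fun _ => 0, hF i, const_dioph 0, by simp⟩
  | H2 n =>
    exact ⟨fun _ => n.toNat, fun _ => (-n).toNat, const_dioph _, const_dioph _,
      fun v => by simp⟩
  | H3 p q hp hq =>
    obtain ⟨p₁, p₂, hp₁, hp₂, hp⟩ := hp
    obtain ⟨q₁, q₂, hq₁, hq₂, hq⟩ := hq
    refine ⟨_, _, add_dioph hp₁ hq₂, add_dioph hp₂ hq₁, fun v => ?_⟩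
    rw [Poly.sub_apply, hp, hq]
    push_cast
    ring
  | H4 p q hp hq =>
    obtain ⟨p₁, p₂, hp₁, hp₂, hp⟩ := hp
    obtain ⟨q₁, q₂, hq₁, hq₂, hq⟩ := hq
    refine ⟨_, _, add_dioph (mul_dioph hp₁ hq₁) (mul_dioph hp₂ hq₂),
      add_dioph (mul_dioph hp₁ hq₂) (mul_dioph hp₂ hq₁), fun v => ?_⟩
    rw [Poly.mul_apply, hp, hq]
    push_cast
    ring

theorem subst_dioph {S : Set (γ → ℕ)} (hS : Dioph S) {F : γ → (α → ℕ) → ℕ}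
    (hF : ∀ i, DiophFn (F i)) : Dioph {v | (fun i => F i v) ∈ S} := by
  obtain ⟨β, p, hp⟩ := hS
  obtain ⟨p₁, p₂, hp₁, hp₂, hsub⟩ := exists_dioph_poly_eq_sub p
    (F := Sum.elim (fun i w => F i (w ∘ Sum.inl)) fun j w => w (Sum.inr j))
    (Sum.rec (fun i => reindex_diophFn Sum.inl (hF i)) fun j => proj_dioph (Sum.inr j))
  refine Dioph.ext (ex_dioph (eq_dioph hp₁ hp₂)) fun v => ((hp _).trans ?_).symm
  refine exists_congr fun t => ?_
  have : Sum.elim (fun i => F i v) t = fun i => Sum.elim (fun i w => F i (w ∘ Sum.inl))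
      (fun j w => w (Sum.inr j)) i (Sum.elim v t) := by
    ext (i | j) <;> rfl
  rw [this, hsub, sub_eq_zero, Nat.cast_inj]
  rfl

theorem subst_diophFn {f : (γ → ℕ) → ℕ} (df : DiophFn f) {F : γ → (α → ℕ) → ℕ}
    (hF : ∀ i, DiophFn (F i)) : DiophFn fun v => f fun i => F i v :=
  Dioph.ext (subst_dioph df (F := Option.elim' (fun v => v none) fun i v => F i (v ∘ some))
    (Option.rec (proj_dioph none) fun i => reindex_diophFn some (hF i))) fun _ => Iff.rfl

theorem forall_dioph {ι : Type*} [Finite ι] {S : ι → Set (α → ℕ)} (h : ∀ i, Dioph (S i)) :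
    Dioph {v | ∀ i, v ∈ S i} := by
  cases nonempty_fintype ι
  suffices ∀ l : List ι, Dioph {v | ∀ i ∈ l, v ∈ S i} from
    Dioph.ext (this univ.toList) fun v => by simp
  intro l
  induction l with
  | nil => exact Dioph.ext (eq_dioph (const_dioph 0) (const_dioph 0)) fun v => by simp
  | cons i l ih => exact Dioph.ext ((h i).inter ih) fun v => by simp

theorem choose_dioph (df : DiophFn f) (dg : DiophFn g) : DiophFn fun v => (f v).choose (g v) := by
  have db : DiophFn fun v => 2 ^ f v + 1 :=
    add_dioph (pow_dioph (const_dioph 2) df) (const_dioph 1)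
  simp only [fun v => choose_eq_pow_div_pow_mod
    (fun i => Nat.lt_succ_of_le (Nat.choose_le_two_pow (f v) i)) (g v)]
  exact mod_dioph (div_dioph (pow_dioph (add_dioph db (const_dioph 1)) df) (pow_dioph db dg)) db

theorem factorial_dioph (df : DiophFn f) : DiophFn fun v => (f v)! := by
  have dr : DiophFn fun v => f v ^ 2 * (f v ^ f v + 1) + 1 :=
    add_dioph (mul_dioph (pow_dioph df (const_dioph 2))
      (add_dioph (pow_dioph df df) (const_dioph 1))) (const_dioph 1)
  have large (v) : f v ^ 2 * ((f v)! + 1) < f v ^ 2 * (f v ^ f v + 1) + 1 := by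
    refine Nat.lt_succ_of_le ?_
    gcongr
    exact Nat.factorial_le_pow (f v)
  simp only [← fun v => pow_div_choose_eq_factorial (large v)]
  exact div_dioph (pow_dioph dr df) (choose_dioph dr df)

theorem descFactorial_dioph (df : DiophFn f) (dg : DiophFn g) :
    DiophFn fun v => (f v).descFactorial (g v) := by
  simp only [Nat.descFactorial_eq_factorial_mul_choose]
  exact mul_dioph (factorial_dioph dg) (choose_dioph df dg)

end Closure

section Poly
variable {γ : Type*}

theorem poly_modEq (p : Poly γ) {d : ℕ} {x y : γ → ℕ} (h : ∀ i, x i ≡ y i [MOD d]) :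
    p x ≡ p y [ZMOD d] := by
  induction p using Poly.induction with
  | H1 i => simpa using Int.natCast_modEq_iff.2 (h i)
  | H2 n => simp
  | H3 p q hp hq => simpa using hp.sub hq
  | H4 p q hp hq => simpa using hp.mul hq

theorem exists_dioph_natAbs_poly_le (p : Poly γ) {F : γ → (α → ℕ) → ℕ}
    (hF : ∀ i, DiophFn (F i)) :
    ∃ B : (α → ℕ) → ℕ, DiophFn B ∧ ∀ v x, (∀ i, x i ≤ F i v) → (p x).natAbs ≤ B v := by
  induction p using Poly.induction with
  | H1 i => exact ⟨F i, hF i, fun v x h => by simpa using h i⟩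
  | H2 n => exact ⟨fun _ => n.natAbs, const_dioph _, fun v x _ => by simp⟩
  | H3 p q hp hq =>
    obtain ⟨B, dB, hB⟩ := hp
    obtain ⟨C, dC, hC⟩ := hq
    exact ⟨_, add_dioph dB dC, fun v x h =>
      (Int.natAbs_sub_le _ _).trans (add_le_add (hB v x h) (hC v x h))⟩
  | H4 p q hp hq =>
    obtain ⟨B, dB, hB⟩ := hp
    obtain ⟨C, dC, hC⟩ := hq
    exact ⟨_, mul_dioph dB dC, fun v x h =>
      (Int.natAbs_mul _ _).trans_le (Nat.mul_le_mul (hB v x h) (hC v x h))⟩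

theorem exists_finset_dependsOn_poly (p : Poly γ) : ∃ s : Finset γ, DependsOn p s := by
  classical
  induction p using Poly.induction with
  | H1 i => exact ⟨{i}, fun x y h => by simp [h i]⟩
  | H2 n => exact ⟨∅, fun x y _ => by simp⟩
  | H3 p q hp hq =>
    obtain ⟨s, hs⟩ := hp
    obtain ⟨t, ht⟩ := hq
    refine ⟨s ∪ t, fun x y h => ?_⟩
    rw [Poly.sub_apply, Poly.sub_apply, hs fun i hi => h i (mem_union_left t hi),
      ht fun i hi => h i (mem_union_right s hi)]
  | H4 p q hp hq =>
    obtain ⟨s, hs⟩ := hp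
    obtain ⟨t, ht⟩ := hq
    refine ⟨s ∪ t, fun x y h => ?_⟩
    rw [Poly.mul_apply, Poly.mul_apply, hs fun i hi => h i (mem_union_left t hi),
      ht fun i hi => h i (mem_union_right s hi)]

theorem exists_finite_poly_of_dioph {S : Set (α → ℕ)} (hS : Dioph S) :
    ∃ (β : Type) (_ : Finite β) (p : Poly (α ⊕ β)),
      ∀ v, v ∈ S ↔ ∃ t, p (Sum.elim v t) = 0 := by
  classical
  obtain ⟨β, p, hp⟩ := hS
  obtain ⟨s, hs⟩ := exists_finset_dependsOn_poly p
  let collapse (j : β) : Option {j // Sum.inr j ∈ s} :=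
    if h : Sum.inr j ∈ s then some ⟨j, h⟩ else none
  have : Finite {j // Sum.inr j ∈ s} := Finite.of_injective (fun j => (⟨_, j.2⟩ : s))
    fun j k h => by simpa [Subtype.ext_iff] using h
  refine ⟨Option {j // Sum.inr j ∈ s}, inferInstance, p.map (Sum.map id collapse),
    fun v => (hp v).trans ⟨fun ⟨t, ht⟩ => ?_, fun ⟨t, ht⟩ => ⟨t ∘ collapse, ?_⟩⟩⟩
  · refine ⟨Option.elim' 0 fun j => t j, ?_⟩
    rw [Poly.map_apply, ← ht]
    refine hs ?_
    rintro (i | j) hi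
    · rfl
    · simp [collapse, mem_coe.1 hi]
  · rwa [Poly.map_apply, Sum.elim_comp_map] at ht

end Poly

section BoundedQuantifier
variable {f g : (α → ℕ) → ℕ}

theorem forall_lt_exists_lt_poly_eq_zero_dioph {β : Type} [Finite β] (p : Poly (Option α ⊕ β))
    (df : DiophFn f) (dg : DiophFn g) :
    Dioph {v | ∀ k < f v, ∃ t : β → ℕ, (∀ i, t i < g v) ∧
      p (Sum.elim (Option.elim' k v) t) = 0} := by
  obtain ⟨B, dB, hB⟩ := exists_dioph_natAbs_poly_le p
    (F := Sum.elim (Option.elim' f fun i v => v i) fun _ => g)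
    (Sum.rec (Option.rec df proj_dioph) fun _ => dg)
  let Q (v : α → ℕ) : ℕ := B v + f v + 3
  let N (v : α → ℕ) : ℕ := (Q v)! ^ 2 - 1
  let C (v : α → ℕ) : ℕ := (N v).choose (f v)
  have dN : DiophFn N := sub_dioph (pow_dioph (factorial_dioph
    (add_dioph (add_dioph dB df) (const_dioph 3))) (const_dioph 2)) (const_dioph 1)
  have dC : DiophFn fun w : α ⊕ β → ℕ => C (w ∘ Sum.inl) :=
    reindex_diophFn Sum.inl (choose_dioph dN df)
  let args : Option α ⊕ β → (α ⊕ β → ℕ) → ℕ :=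
    Sum.elim (Option.elim' (fun w => N (w ∘ Sum.inl)) fun i w => w (Sum.inl i))
      fun j w => w (Sum.inr j)
  have d_poly : DiophFn fun w => (p fun i => args i w).natAbs :=
    subst_diophFn (abs_poly_dioph p) (Sum.rec (Option.rec (reindex_diophFn Sum.inl dN)
      fun i => proj_dioph (Sum.inl i)) fun j => proj_dioph (Sum.inr j))
  have args_elim (v : α → ℕ) (a : β → ℕ) :
      (fun i => args i (Sum.elim v a)) = Sum.elim (Option.elim' (N v) v) a := by
    ext ((_ | i) | j) <;> rfl
  have d_code := ex_dioph ((dvd_dioph dC d_poly).inter (forall_dioph fun i : β =>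
    dvd_dioph dC (descFactorial_dioph (proj_dioph (Sum.inr i)) (reindex_diophFn Sum.inl dg))))
  have three_le (v : α → ℕ) : 3 ≤ Q v := Nat.le_add_left 3 _
  have f_le (v : α → ℕ) : f v ≤ Q v := (Nat.le_add_left _ _).trans (Nat.le_add_right _ 3)
  have congruent (v : α → ℕ) : PreservesModEq fun k t => p (Sum.elim (Option.elim' k v) t) :=
    fun d k k' t t' hk ht => poly_modEq p (Sum.rec (Option.rec hk fun _ => rfl) ht)
  refine Dioph.ext d_code fun v => ⟨fun ⟨a, hpa, ha⟩ k hk => ?_, fun h => ?_⟩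
  · refine (congruent v).exists_zero_of_code (three_le v) (f_le v) hk ?_
      (args_elim v a ▸ hpa) ha
    refine fun t ht => (hB v _ ?_).trans ((Nat.le_add_right _ _).trans (Nat.le_add_right _ 3))
    exact Sum.rec (Option.rec hk.le fun _ => le_rfl) fun i => (ht i).le
  · obtain ⟨a, hpa, ha⟩ := (congruent v).exists_code (three_le v) (f_le v) h
    rw [← args_elim] at hpa
    exact ⟨a, hpa, ha⟩

theorem forall_lt_dioph {S : Set (Option α → ℕ)} (hS : Dioph S) (df : DiophFn f) :
    Dioph {v | ∀ k < f v, Option.elim' k v ∈ S} := by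
  obtain ⟨β, _, p, hp⟩ := exists_finite_poly_of_dioph hS
  have d_bounded := ex1_dioph (forall_lt_exists_lt_poly_eq_zero_dioph
    (p.map (Sum.map (Option.map some) id)) (reindex_diophFn some df) (proj_dioph none))
  have drop_bound (k u : ℕ) (v : α → ℕ) (t : β → ℕ) :
      p.map (Sum.map (Option.map some) id) (Sum.elim (Option.elim' k (Option.elim' u v)) t) =
        p (Sum.elim (Option.elim' k v) t) := by
    rw [Poly.map_apply]
    congr 1
    ext ((_ | i) | j) <;> rfl
  refine Dioph.ext d_bounded fun v => ⟨fun ⟨u, hu⟩ k hk => ?_, fun h => ?_⟩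
  · obtain ⟨t, -, ht⟩ := hu k hk
    exact (hp _).2 ⟨t, drop_bound k u v t ▸ ht⟩
  · choose! t ht using fun k hk => (hp _).1 (h k hk)
    obtain ⟨u, hu⟩ := (Set.finite_range fun ki : Fin (f v) × β => t ki.1 ki.2).bddAbove
    refine ⟨u + 1, fun k hk => ⟨t k, fun i => ?_, (drop_bound k _ v _).trans (ht k hk)⟩⟩
    exact Nat.lt_succ_of_le (hu ⟨(⟨k, hk⟩, i), rfl⟩)

end BoundedQuantifier

section Recursion
variable {f g : (α → ℕ) → ℕ}

theorem natPair_dioph (df : DiophFn f) (dg : DiophFn g) :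
    DiophFn fun v => Nat.pair (f v) (g v) := by
  have df' := reindex_diophFn some df
  have dg' := reindex_diophFn some dg
  have dn : DiophFn fun v : Option α → ℕ => v none := proj_dioph none
  have d_lt := (lt_dioph df' dg').inter (eq_dioph (add_dioph (mul_dioph dg' dg') df') dn)
  have d_ge := (le_dioph dg' df').inter
    (eq_dioph (add_dioph (add_dioph (mul_dioph df' df') df') dg') dn)
  refine Dioph.ext (d_lt.union d_ge) fun v => ?_
  simp only [Set.mem_union, Set.mem_inter_iff, Set.mem_ofPred_eq, Nat.pair]
  split_ifs <;> omega

theorem unpair_fst_dioph (df : DiophFn f) : DiophFn fun v => (f v).unpair.1 := by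
  have graph (n a : ℕ) : (∃ b, Nat.pair a b = n) ↔ n.unpair.1 = a :=
    ⟨by rintro ⟨b, rfl⟩; simp, by rintro rfl; exact ⟨_, Nat.pair_unpair n⟩⟩
  exact Dioph.ext (ex1_dioph (eq_dioph (natPair_dioph (proj_dioph (some none)) (proj_dioph none))
    (reindex_diophFn (some ∘ some) df))) fun v => graph (f (v ∘ some)) (v none)

theorem unpair_snd_dioph (df : DiophFn f) : DiophFn fun v => (f v).unpair.2 := by
  have graph (n b : ℕ) : (∃ a, Nat.pair a b = n) ↔ n.unpair.2 = b :=
    ⟨by rintro ⟨a, rfl⟩; simp, by rintro rfl; exact ⟨_, Nat.pair_unpair n⟩⟩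
  exact Dioph.ext (ex1_dioph (eq_dioph (natPair_dioph (proj_dioph none) (proj_dioph (some none)))
    (reindex_diophFn (some ∘ some) df))) fun v => graph (f (v ∘ some)) (v none)

theorem beta_dioph (df : DiophFn f) (dg : DiophFn g) : DiophFn fun v => Nat.beta (f v) (g v) :=
  mod_dioph (unpair_fst_dioph df) (add_dioph
    (mul_dioph (add_dioph dg (const_dioph 1)) (unpair_snd_dioph df)) (const_dioph 1))

theorem exists_beta_eq (s : ℕ → ℕ) (n : ℕ) : ∃ c, ∀ i ≤ n, Nat.beta c i = s i := by
  refine ⟨Nat.unbeta ((List.range (n + 1)).map s), fun i hi => ?_⟩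
  simpa using Nat.beta_unbeta_coe ((List.range (n + 1)).map s) ⟨i, by simpa using by omega⟩

theorem natRec_eq_iff_exists_beta (a : ℕ) (h : ℕ → ℕ → ℕ) (n w : ℕ) :
    (Nat.rec a h n : ℕ) = w ↔
      ∃ c, (Nat.beta c 0 = a ∧ ∀ k < n, Nat.beta c (k + 1) = h k (Nat.beta c k)) ∧
        Nat.beta c n = w := by
  constructor
  · rintro rfl
    obtain ⟨c, hc⟩ := exists_beta_eq (fun k => Nat.rec a h k) n
    refine ⟨c, ⟨hc 0 n.zero_le, fun k hk => ?_⟩, hc n le_rfl⟩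
    rw [hc (k + 1) hk, hc k hk.le]
  · rintro ⟨c, ⟨h0, hs⟩, rfl⟩
    suffices ∀ k ≤ n, (Nat.rec a h k : ℕ) = Nat.beta c k from this n le_rfl
    intro k hk
    induction k with
    | zero => exact h0.symm
    | succ k ih => rw [hs k hk, ← ih (Nat.le_of_succ_le hk)]

theorem natRec_dioph {a n : (α → ℕ) → ℕ} {h : ℕ → ℕ → (α → ℕ) → ℕ}
    (da : DiophFn a) (dn : DiophFn n)
    (dh : DiophFn fun w : Option (Option α) → ℕ => h (w none) (w (some none)) (w ∘ some ∘ some)) :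
    DiophFn fun v => (Nat.rec (a v) (fun k r => h k r v) (n v) : ℕ) := by
  -- The variables are the code `none`, the value `some none` and the parameters.
  have dc : DiophFn fun w : Option (Option α) → ℕ => w none := proj_dioph none
  have da' := reindex_diophFn (some ∘ some : α → Option (Option α)) da
  have dn' := reindex_diophFn (some ∘ some : α → Option (Option α)) dn
  -- In `d_step` the bounded variable becomes `none` and the code moves to `some none`.
  have dc' : DiophFn fun w : Option (Option (Option α)) → ℕ => w (some none) := proj_dioph _
  have dk : DiophFn fun w : Option (Option (Option α)) → ℕ => w none := proj_dioph none
  have d_next := subst_diophFn dh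
    (F := Option.elim' (fun w => w none) (Option.elim' (fun w => Nat.beta (w (some none)) (w none))
      fun i w => w (some (some (some i)))))
    (Option.rec dk (Option.rec (beta_dioph dc' dk) fun i => proj_dioph _))
  have d_step := forall_lt_dioph (eq_dioph (beta_dioph dc' (add_dioph dk (const_dioph 1))) d_next)
    dn'
  have d_graph := ex1_dioph (((eq_dioph (beta_dioph dc (const_dioph 0)) da').inter d_step).inter
    (eq_dioph (beta_dioph dc dn') (proj_dioph (some none))))
  exact Dioph.ext d_graph fun v => (natRec_eq_iff_exists_beta (a (v ∘ some))
    (fun k r => h k r (v ∘ some)) (n (v ∘ some)) (v none)).symm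

theorem primrec_dioph {F : ℕ → ℕ} (hF : Nat.Primrec F) (df : DiophFn f) :
    DiophFn fun v => F (f v) := by
  induction hF generalizing α f with
  | zero => exact const_dioph 0
  | succ => exact add_dioph df (const_dioph 1)
  | left => exact unpair_fst_dioph df
  | right => exact unpair_snd_dioph df
  | pair _ _ ihF ihG => exact natPair_dioph (ihF df) (ihG df)
  | comp _ _ ihF ihG => exact ihF (ihG df)
  | @prec F G _ _ ihF ihG =>
    refine natRec_dioph (h := fun k r v => G (Nat.pair (f v).unpair.1 (Nat.pair k r)))
      (ihF (unpair_fst_dioph df)) (unpair_snd_dioph df) (ihG ?_)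
    exact natPair_dioph (unpair_fst_dioph (reindex_diophFn (some ∘ some) df))
      (natPair_dioph (proj_dioph none) (proj_dioph (some none)))

end Recursion

open Nat.Partrec (Code) in
theorem rePred_dioph {p : ℕ → Prop} (hp : REPred p) {f : (α → ℕ) → ℕ} (df : DiophFn f) :
    Dioph {v | p (f v)} := by
  obtain ⟨c, hc⟩ := Code.exists_code.1 (Partrec.nat_iff.1 (hp.map (Computable.const 0).to₂))
  let steps (m : ℕ) : ℕ := Encodable.encode (Code.evaln m.unpair.1 c m.unpair.2)
  have steps_primrec : Nat.Primrec steps := Primrec.nat_iff.1 <| Primrec.encode.comp <|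
    Code.primrec_evaln.comp <| ((Primrec.fst.comp Primrec.unpair).pair (Primrec.const c)).pair
      (Primrec.snd.comp Primrec.unpair)
  have halts_iff (n : ℕ) : p n ↔ ∃ k, steps (Nat.pair k n) ≠ 0 := by
    have hdom : p n ↔ (Code.eval c n).Dom := by simp [hc, Part.assert]
    simp only [hdom, Part.dom_iff_mem, Code.evaln_complete, steps, Nat.unpair_pair]
    rw [exists_comm]
    refine exists_congr fun k => ?_
    cases Code.evaln k c n <;> simp
  refine Dioph.ext (ex1_dioph (ne_dioph (primrec_dioph steps_primrec
    (natPair_dioph (proj_dioph none) (reindex_diophFn some df))) (const_dioph 0)))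
    fun v => (halts_iff (f v)).symm

end Diophantine

section Putnam
open MvPolynomial

theorem exists_mvPolynomial_eval_eq_poly {γ : Type*} (p : Poly γ) :
    ∃ P : MvPolynomial γ ℤ, ∀ x : γ → ℕ, p x = eval (fun i => (x i : ℤ)) P := by
  induction p using Poly.induction with
  | H1 i => exact ⟨X i, fun x => by simp⟩
  | H2 n => exact ⟨C n, fun x => by simp⟩
  | H3 p q hp hq =>
    obtain ⟨P, hP⟩ := hp
    obtain ⟨Q, hQ⟩ := hq
    exact ⟨P - Q, fun x => by simp [hP, hQ]⟩
  | H4 p q hp hq =>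
    obtain ⟨P, hP⟩ := hp
    obtain ⟨Q, hQ⟩ := hq
    exact ⟨P * Q, fun x => by simp [hP, hQ]⟩

theorem exists_sum_fin_four_sq_eq (n : ℕ) : ∃ w : Fin 4 → ℤ, ∑ j, w j ^ 2 = n := by
  obtain ⟨a, b, c, d, h⟩ := Nat.sum_four_squares n
  exact ⟨![a, b, c, d], by simp [Fin.sum_univ_four, ← h]⟩

-- Putnam's trick: the variable `n` of a solvable equation `P = 0` becomes the value
-- `(n + 1) * (1 - P ^ 2) - 1`, which is negative unless `P = 0`.
theorem exists_mvPolynomial_forall_natCast_iff {p : ℕ → Prop}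
    (hp : Dioph {v : Unit → ℕ | p (v ())}) :
    ∃ (σ : Type) (Q : MvPolynomial σ ℤ), ∀ n : ℕ, p n ↔ ∃ w : σ → ℤ, eval w Q = n := by
  obtain ⟨β, q, hq⟩ := hp
  obtain ⟨P, hP⟩ := exists_mvPolynomial_eval_eq_poly q
  let square (i : Unit ⊕ β) : MvPolynomial ((Unit ⊕ β) × Fin 4) ℤ := ∑ j, X (i, j) ^ 2
  refine ⟨_, (square (Sum.inl ()) + 1) * (1 - bind₁ square P ^ 2) - 1, fun n => ?_⟩
  have eval_eq {w : (Unit ⊕ β) × Fin 4 → ℤ} {x : Unit ⊕ β → ℕ}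
      (hw : ∀ i, ∑ j, w (i, j) ^ 2 = (x i : ℤ)) :
      eval w ((square (Sum.inl ()) + 1) * (1 - bind₁ square P ^ 2) - 1) =
        (x (Sum.inl ()) + 1) * (1 - q x ^ 2) - 1 := by
    have hsq (i) : eval w (square i) = x i := by simp [square, hw]
    have hbind : eval w (bind₁ square P) = q x := by
      rw [hP, ← funext hsq]
      exact eval₂Hom_bind₁ (RingHom.id ℤ) w square P
    simp [hsq, hbind]
  constructor
  · intro hn
    obtain ⟨t, ht⟩ := (hq fun _ => n).1 hn
    choose w hw using fun i => exists_sum_fin_four_sq_eq (Sum.elim (fun _ => n) t i)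
    refine ⟨fun ij => w ij.1 ij.2, ?_⟩
    rw [eval_eq (x := Sum.elim (fun _ => n) t) hw, ht]
    simp
  · rintro ⟨w, hw⟩
    choose x hx using fun i => Int.eq_ofNat_of_zero_le (sum_nonneg fun j _ => sq_nonneg (w (i, j)))
    rw [eval_eq hx] at hw
    have hqx : q x = 0 := by
      by_contra hne
      nlinarith [sq_pos_of_ne_zero hne]
    have hxn : x (Sum.inl ()) = n := by simpa [hqx] using hw
    refine (hq fun _ => n).2 ⟨x ∘ Sum.inr, ?_⟩
    rwa [← hxn, show (fun _ : Unit => x (Sum.inl ())) = x ∘ Sum.inl from rfl,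
      Sum.elim_comp_inl_inr]

end Putnam

/-- The `2 × 2` minor in columns `i` and `j` of the matrix with rows `x` and `y`. -/
def minor {ι : Type*} (i j : ι) (x y : ι → ℤ) : ℤ := x i * y j - x j * y i

/-- The integral linear combinations of `2 × 2` minors, as functions of the two rows: the
left-hand sides of (SKEW), with columns indexed by `ι` in place of `Fin s`. -/
def skewForms (ι : Type*) : Submodule ℤ ((ι → ℤ) → (ι → ℤ) → ℤ) :=
  Submodule.span ℤ (Set.range fun p : ι × ι => minor p.1 p.2)

section SkewForms
variable {ι κ : Type*}

theorem minor_mem_skewForms (i j : ι) : minor i j ∈ skewForms ι :=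
  Submodule.subset_span ⟨(i, j), rfl⟩

theorem minor_swap (i j : ι) : minor j i = -minor i j := by
  ext x y
  simp [minor]

theorem minor_eq_mul_of_minor_eq_one {i₀ j₀ i : ι} {x y : ι → ℤ} (h₁ : minor i₀ j₀ x y = 1)
    (h₀ : minor i₀ i x y = 0) (j : ι) : minor i j x y = minor i j₀ x y * minor i₀ j x y := by
  unfold minor at *
  linear_combination (-(x i * y j - x j * y i)) * h₁ + (x j₀ * y j - x j * y j₀) * h₀

theorem exists_sum_ite_lt_eq_minor {s : ℕ} (i j : Fin s) :
    ∃ a : Fin s → Fin s → ℤ, ∀ x y : Fin s → ℤ,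
      (∑ k, ∑ l, if k < l then a k l * (x k * y l - x l * y k) else 0) = minor i j x y := by
  wlog hij : i < j generalizing i j
  · rcases (not_lt.1 hij).eq_or_lt with rfl | hji
    · exact ⟨0, fun x y => by simp [minor, mul_comm]⟩
    · obtain ⟨a, ha⟩ := this j i hji
      refine ⟨-a, fun x y => ?_⟩
      rw [minor_swap, Pi.neg_apply, Pi.neg_apply, ← ha]
      simp [← sum_neg_distrib, apply_ite Neg.neg]
  refine ⟨Pi.single i (Pi.single j 1), fun x y => ?_⟩
  rw [sum_eq_single i (by simp +contextual) (by simp),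
    sum_eq_single j (by simp +contextual) (by simp)]
  simp [hij, minor]

theorem exists_sum_ite_lt_eq_of_mem_skewForms {s : ℕ} (e : ι → Fin s)
    {F : (ι → ℤ) → (ι → ℤ) → ℤ} (hF : F ∈ skewForms ι) :
    ∃ a : Fin s → Fin s → ℤ, ∀ x y : Fin s → ℤ,
      (∑ k, ∑ l, if k < l then a k l * (x k * y l - x l * y k) else 0) = F (x ∘ e) (y ∘ e) := by
  induction hF using Submodule.span_induction with
  | mem F hF =>
    obtain ⟨⟨i, j⟩, rfl⟩ := hF
    exact exists_sum_ite_lt_eq_minor (e i) (e j)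
  | zero => exact ⟨0, fun x y => by simp⟩
  | add F G _ _ hF hG =>
    obtain ⟨a, ha⟩ := hF
    obtain ⟨b, hb⟩ := hG
    refine ⟨a + b, fun x y => ?_⟩
    rw [Pi.add_apply, Pi.add_apply, ← ha, ← hb, ← sum_add_distrib]
    simp only [← sum_add_distrib, Pi.add_apply, add_mul, ← ite_add_zero]
  | smul c F _ hF =>
    obtain ⟨a, ha⟩ := hF
    refine ⟨c • a, fun x y => ?_⟩
    rw [Pi.smul_apply, Pi.smul_apply, ← ha]
    simp [mul_sum, mul_assoc]

theorem exists_SKEW_update_iff [Finite ι] [Finite κ] {F₀ : (ι → ℤ) → (ι → ℤ) → ℤ}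
    {F : κ → (ι → ℤ) → (ι → ℤ) → ℤ} (hF₀ : F₀ ∈ skewForms ι) (hF : ∀ k, F k ∈ skewForms ι)
    (b : κ → ℤ) :
    ∃ (m s : ℕ) (a : Fin m → Fin s → Fin s → ℤ) (b' : Fin m → ℤ) (q : Fin m), ∀ n : ℤ,
      SKEW m s a (Function.update b' q n) ↔
        ∃ x y : ι → ℤ, (∀ k, F k x y = b k) ∧ F₀ x y = n := by
  obtain ⟨s, ⟨e⟩⟩ := Finite.exists_equiv_fin ι
  obtain ⟨m, ⟨e'⟩⟩ := Finite.exists_equiv_fin (Option κ)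
  choose a ha using fun k : Option κ => exists_sum_ite_lt_eq_of_mem_skewForms e
    (F := Option.elim' F₀ F k) (Option.rec hF₀ hF k)
  refine ⟨m, s, a ∘ e'.symm, Option.elim' 0 b ∘ e'.symm, e' none, fun n => ?_⟩
  have update_eq : Function.update (Option.elim' 0 b ∘ e'.symm) (e' none) n =
      Option.elim' n b ∘ e'.symm := by
    ext k
    obtain ⟨_ | k, rfl⟩ := e'.surjective k <;> simp
  have skew_iff (x y : ι → ℤ) : (∀ k, Option.elim' F₀ F k x y = Option.elim' n b k) ↔
      (∀ k, F k x y = b k) ∧ F₀ x y = n := by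
    rw [Option.forall]
    exact and_comm
  simp only [SKEW, update_eq, Function.comp_apply, ha, ← skew_iff]
  refine ⟨fun ⟨x, y, h⟩ => ⟨x ∘ e, y ∘ e, fun k => by simpa using h (e' k)⟩,
    fun ⟨x, y, h⟩ => ⟨x ∘ e.symm, y ∘ e.symm, fun k => ?_⟩⟩
  simpa [Function.comp_assoc] using h (e'.symm k)

end SkewForms

section Veronese
open MvPolynomial
variable {σ : Type*}

theorem eq_prod_pow_of_map_add {R : Type*} [CommMonoid R] {M : σ →₀ ℕ} {w : (σ →₀ ℕ) → R}
    (h0 : w 0 = 1) (hadd : ∀ m m', m + m' ≤ M → w (m + m') = w m * w m') {m : σ →₀ ℕ}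
    (hm : m ≤ M) :
    w m = m.prod fun i k => w (Finsupp.single i 1) ^ k := by
  induction m using Finsupp.induction_linear with
  | zero => simpa using h0
  | add m m' ih ih' =>
    rw [hadd m m' hm, ih (le_self_add.trans hm), ih' (le_add_self.trans hm)]
    exact (Finsupp.prod_add_index' (by simp) fun i k l => pow_add _ k l).symm
  | single i k =>
    rw [Finsupp.prod_single_index (h := fun i k => w (Finsupp.single i 1) ^ k) (pow_zero _)]
    induction k with
    | zero => simpa using h0
    | succ k ih =>
      rw [Finsupp.single_add] at hm ⊢
      rw [hadd _ _ hm, ih (le_self_add.trans hm), pow_succ]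

/-- The first of the two columns attached to the monomial with exponent `m`. The exponent is
truncated at `M` to make the function total; only `m ≤ M` matters. -/
noncomputable def leftColumn (M m : σ →₀ ℕ) : Set.Iic M ⊕ Set.Iic M :=
  Sum.inl ⟨m ⊓ M, Set.mem_Iic.2 inf_le_right⟩

/-- The second of the two columns attached to the monomial with exponent `m`, truncated as in
`leftColumn`. -/
noncomputable def rightColumn (M m : σ →₀ ℕ) : Set.Iic M ⊕ Set.Iic M :=
  Sum.inr ⟨m ⊓ M, Set.mem_Iic.2 inf_le_right⟩

/-- The equations forcing `m ↦ minor (leftColumn M 0) (rightColumn M m) x y` to be the family of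
values of all monomials with exponent at most `M` at some integer point. -/
structure IsVeronese (M : σ →₀ ℕ) (x y : Set.Iic M ⊕ Set.Iic M → ℤ) : Prop where
  minor_zero : minor (leftColumn M 0) (rightColumn M 0) x y = 1
  minor_left : ∀ m ≤ M, minor (leftColumn M 0) (leftColumn M m) x y = 0
  minor_add : ∀ m m', m + m' ≤ M → minor (leftColumn M m) (rightColumn M m') x y =
    minor (leftColumn M 0) (rightColumn M (m + m')) x y

theorem IsVeronese.exists_minor_eq_prod {M : σ →₀ ℕ} {x y : Set.Iic M ⊕ Set.Iic M → ℤ}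
    (h : IsVeronese M x y) : ∃ v : σ → ℤ, ∀ m ≤ M,
      minor (leftColumn M 0) (rightColumn M m) x y = m.prod fun i k => v i ^ k := by
  refine ⟨_, fun m => eq_prod_pow_of_map_add
    (w := fun m => minor (leftColumn M 0) (rightColumn M m) x y) h.minor_zero fun m m' hm => ?_⟩
  have hm₀ : m ≤ M := le_self_add.trans hm
  rw [← h.minor_add m m' hm, minor_eq_mul_of_minor_eq_one h.minor_zero (h.minor_left m hm₀),
    h.minor_add m 0 (by simpa using hm₀), add_zero]

theorem exists_isVeronese_minor_eq_prod (M : σ →₀ ℕ) (v : σ → ℤ) :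
    ∃ x y, IsVeronese M x y ∧ ∀ m ≤ M,
      minor (leftColumn M 0) (rightColumn M m) x y = m.prod fun i k => v i ^ k := by
  let value (m : σ →₀ ℕ) : ℤ := m.prod fun i k => v i ^ k
  let x : Set.Iic M ⊕ Set.Iic M → ℤ := Sum.elim (fun m => value m) 0
  let y : Set.Iic M ⊕ Set.Iic M → ℤ := Sum.elim 0 fun m => value m
  have value_add (m m' : σ →₀ ℕ) : value (m + m') = value m * value m' :=
    Finsupp.prod_add_index' (by simp) fun i k l => pow_add _ k l
  have minor_eq {m m' : σ →₀ ℕ} (hm : m ≤ M) (hm' : m' ≤ M) :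
      minor (leftColumn M m) (rightColumn M m') x y = value (m + m') := by
    simp [minor, leftColumn, rightColumn, x, y, inf_eq_left.2 hm, inf_eq_left.2 hm', value_add]
  refine ⟨x, y, ⟨?_, fun m _ => ?_, fun m m' hm => ?_⟩, fun m hm => ?_⟩
  · rw [minor_eq zero_le zero_le]
    simp [value]
  · simp [minor, leftColumn, y]
  · rw [minor_eq (le_self_add.trans hm) (le_add_self.trans hm), minor_eq zero_le hm, zero_add]
  · rw [minor_eq zero_le hm, zero_add]

theorem exists_isVeronese_sum_minor_eq_iff {M : σ →₀ ℕ} {Q : MvPolynomial σ ℤ}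
    (hM : ∀ m ∈ Q.support, m ≤ M) (n : ℤ) :
    (∃ x y, IsVeronese M x y ∧
      ∑ m ∈ Q.support, Q.coeff m * minor (leftColumn M 0) (rightColumn M m) x y = n) ↔
      ∃ v : σ → ℤ, eval v Q = n := by
  have eval_eq_sum {x y} {v : σ → ℤ} (h : ∀ m ≤ M,
      minor (leftColumn M 0) (rightColumn M m) x y = m.prod fun i k => v i ^ k) :
      eval v Q = ∑ m ∈ Q.support, Q.coeff m * minor (leftColumn M 0) (rightColumn M m) x y := by
    rw [eval_eq]
    exact sum_congr rfl fun m hm => by rw [h m (hM m hm), Finsupp.prod]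
  constructor
  · rintro ⟨x, y, hxy, hn⟩
    obtain ⟨v, hv⟩ := hxy.exists_minor_eq_prod
    exact ⟨v, (eval_eq_sum hv).trans hn⟩
  · rintro ⟨v, hn⟩
    obtain ⟨x, y, hxy, hv⟩ := exists_isVeronese_minor_eq_prod M v
    exact ⟨x, y, hxy, (eval_eq_sum hv).symm.trans hn⟩

theorem exists_SKEW_update_iff_exists_eval_eq (Q : MvPolynomial σ ℤ) :
    ∃ (m s : ℕ) (a : Fin m → Fin s → Fin s → ℤ) (b : Fin m → ℤ) (q : Fin m), ∀ n : ℤ,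
      SKEW m s a (Function.update b q n) ↔ ∃ v : σ → ℤ, eval v Q = n := by
  classical
  obtain ⟨M, hM⟩ : ∃ M, ∀ m ∈ Q.support, m ≤ M :=
    ⟨Q.support.sup id, fun m hm => le_sup (f := id) hm⟩
  have : Finite (Set.Iic M) := Set.finite_Iic M
  have : Finite {p : (σ →₀ ℕ) × (σ →₀ ℕ) // p.1 + p.2 ≤ M} :=
    (Set.finite_Iic (M, M)).subset fun p hp => ⟨le_self_add.trans hp, le_add_self.trans hp⟩
  let value (m : σ →₀ ℕ) := minor (leftColumn M 0) (rightColumn M m)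
  let F : Option (Set.Iic M ⊕ {p : (σ →₀ ℕ) × (σ →₀ ℕ) // p.1 + p.2 ≤ M}) → _ :=
    Option.elim' (value 0) (Sum.elim (fun m => minor (leftColumn M 0) (leftColumn M m))
      fun p => minor (leftColumn M p.1.1) (rightColumn M p.1.2) - value (p.1.1 + p.1.2))
  have hF : ∀ k, F k ∈ skewForms _ := Option.rec (minor_mem_skewForms _ _) (Sum.rec
    (fun m => minor_mem_skewForms _ _)
    fun p => sub_mem (minor_mem_skewForms _ _) (minor_mem_skewForms _ _))
  have hF₀ : ∑ m ∈ Q.support, Q.coeff m • value m ∈ skewForms _ :=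
    sum_mem fun m _ => Submodule.smul_mem _ _ (minor_mem_skewForms _ _)
  obtain ⟨m, s, a, b, q, h⟩ := exists_SKEW_update_iff hF₀ hF (Option.elim' 1 0)
  refine ⟨m, s, a, b, q, fun n => (h n).trans ?_⟩
  rw [← exists_isVeronese_sum_minor_eq_iff hM n]
  refine exists₂_congr fun x y => and_congr ?_ (by simp [value])
  simp only [Option.forall, Sum.forall, Subtype.forall, Prod.forall, F]
  exact ⟨fun ⟨h0, hleft, hadd⟩ => ⟨h0, hleft, fun m m' hm => sub_eq_zero.1 (hadd m m' hm)⟩,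
    fun h => ⟨h.minor_zero, h.minor_left, fun m m' hm => sub_eq_zero.2 (h.minor_add m m' hm)⟩⟩

end Veronese

section Undecidability

theorem exists_rePred_nat_not_computablePred :
    ∃ p : ℕ → Prop, REPred p ∧ ¬ ComputablePred p := by
  let p (n : ℕ) : Prop := ((Denumerable.ofNat Nat.Partrec.Code n).eval 0).Dom
  refine ⟨p, Partrec.comp (ComputablePred.halting_problem_re 0) (Computable.ofNat _), fun hp => ?_⟩
  refine ComputablePred.halting_problem 0 (ComputablePred.computable_of_manyOneReducible ?_ hp)
  exact ⟨Encodable.encode, Computable.encode, fun c => by simp [p]⟩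

theorem primrec_natCast : Primrec fun n : ℕ => (n : ℤ) := by
  -- The encoding of `ℤ` sends a natural number `n` to `2 * n`.
  apply Primrec.encode_iff.1
  refine (Primrec.nat_mul.comp (Primrec.const 2) Primrec.id).of_eq fun n => ?_
  rfl

theorem primrec_update_natCast {m : ℕ} (b : Fin m → ℤ) (q : Fin m) :
    Primrec fun n : ℕ => Function.update b q (n : ℤ) := by
  refine Primrec.fin_curry.2 (Primrec₂.swap (Primrec.fin_curry₁.2 fun q' => ?_))
  rcases eq_or_ne q' q with rfl | hq
  · simpa using primrec_natCast
  · simpa [hq] using Primrec.const (b q')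

theorem skew_undecidable_general :
    ∃ (m s : ℕ) (a : Fin m → Fin s → Fin s → ℤ) (b : Fin m → ℤ) (q : Fin m),
      ¬ ComputablePred fun n : ℕ => SKEW m s a (Function.update b q (n : ℤ)) := by
  obtain ⟨p, hp, p_undecidable⟩ := exists_rePred_nat_not_computablePred
  obtain ⟨σ, Q, hQ⟩ :=
    exists_mvPolynomial_forall_natCast_iff (rePred_dioph hp (Dioph.proj_dioph ()))
  obtain ⟨m, s, a, b, q, h⟩ := exists_SKEW_update_iff_exists_eval_eq Q
  refine ⟨m, s, a, b, q, fun computable => p_undecidable (computable.of_eq fun n => ?_)⟩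
  rw [h, hQ]

end Undecidability

/-- There exist fixed `m, s` such that the predicate (SKEW) on pairs of integer arrays
`(a, b)` is not computable. -/
theorem skew_undecidable :
    ∃ m s : ℕ, ¬ ComputablePred
      (fun p : (Fin m → Fin s → Fin s → ℤ) × (Fin m → ℤ) => SKEW m s p.1 p.2) := by
  obtain ⟨m, s, a, b, q, h⟩ := skew_undecidable_general
  exact ⟨m, s, fun hp => h (ComputablePred.computable_of_manyOneReducible
    ⟨_, ((Primrec.const a).pair (primrec_update_natCast b q)).to_comp, fun _ => Iff.rfl⟩ hp)⟩
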